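/- Let T be a hyperbolic homeomorphism of a compact metric space (X,d), and let Y ⊆ X be a nonempty compact T-invariant set. Then for every τ > 0 and every sufficiently large integer n, there exists a periodic orbit of T of period at most n entirely contained in the n^{-τ}-neighborhood of Y; that is, there exist p ∈ X and an integer k with 1 ≤ k ≤ n such that T^k p = p and dist(T^j p, Y) ≤ n^{-τ} for every j ∈ ℤ. (Theorem 7.4 of the paper, the Bressaud–Quas Closing Lemma for hyperbolic homeomorphisms.) -/

import Mathlib

/-- Local stable set `W^s_ε(x)`. -/
def locStable {X : Type*} [MetricSpace X] (T : X ≃ₜ X) (ε : ℝ) (x : X) : Set X :=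
  {y | ∀ n : ℕ, dist ((T : X → X)^[n] y) ((T : X → X)^[n] x) ≤ ε}

/-- Local unstable set `W^u_ε(x)`. -/
def locUnstable {X : Type*} [MetricSpace X] (T : X ≃ₜ X) (ε : ℝ) (x : X) : Set X :=
  {y | ∀ n : ℕ, dist ((T.symm : X → X)^[n] y) ((T.symm : X → X)^[n] x) ≤ ε}

/-- Global stable set `W^s(x)`. -/
def gStable {X : Type*} [MetricSpace X] (T : X ≃ₜ X) (x : X) : Set X :=
  {y | Filter.Tendsto (fun n : ℕ => dist ((T : X → X)^[n] y) ((T : X → X)^[n] x))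
    Filter.atTop (nhds 0)}

/-- Global unstable set `W^u(x)`. -/
def gUnstable {X : Type*} [MetricSpace X] (T : X ≃ₜ X) (x : X) : Set X :=
  {y | Filter.Tendsto (fun n : ℕ => dist ((T.symm : X → X)^[n] y) ((T.symm : X → X)^[n] x))
    Filter.atTop (nhds 0)}

/-- `T` is a hyperbolic homeomorphism with constants `ε₀, ε₁`, hyperbolicity exponents
`lu, ls`, bracket map `br` and bracket constant `C₀`. -/
structure HypHomeo {X : Type*} [MetricSpace X] (T : X ≃ₜ X) (ε₀ ε₁ : ℝ)
    (lu ls : X → ℝ) (br : X → X → X) (C₀ : ℝ) : Prop where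
  lipschitz_T : ∃ K : NNReal, LipschitzWith K (T : X → X)
  lipschitz_Tinv : ∃ K : NNReal, LipschitzWith K (T.symm : X → X)
  eps0_pos : 0 < ε₀
  cont_lu : Continuous lu
  cont_ls : Continuous ls
  pos_lu : ∀ x, 0 < lu x
  pos_ls : ∀ x, 0 < ls x
  contract_u : ∀ x x' x'', x' ∈ locUnstable T ε₀ x → x'' ∈ locUnstable T ε₀ x →
    dist (T.symm x') (T.symm x'') ≤ Real.exp (-lu x) * dist x' x''
  contract_s : ∀ y y' y'', y' ∈ locStable T ε₀ y → y'' ∈ locStable T ε₀ y →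
    dist (T y') (T y'') ≤ Real.exp (-ls y) * dist y' y''
  eps1_pos : 0 < ε₁
  eps1_lt : ε₁ < ε₀
  bracket_spec : ∀ x y, dist x y ≤ 2 * ε₁ →
    locUnstable T ε₀ x ∩ locStable T ε₀ y = {br x y}
  bracket_cont : ContinuousOn (fun p : X × X => br p.1 p.2) {p : X × X | dist p.1 p.2 ≤ 2 * ε₁}
  C0_pos : 0 < C₀
  bracket_bound : ∀ x y, dist x y ≤ 2 * ε₁ →
    max (dist (br x y) x) (dist (br x y) y) ≤ C₀ * dist x y

/-- The `n`-th iterate of a homeomorphism, for `n : ℤ`. -/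
def zIter {Y : Type*} [TopologicalSpace Y] (f : Y ≃ₜ Y) : ℤ → Y → Y
  | Int.ofNat n => (f : Y → Y)^[n]
  | Int.negSucc n => (f.symm : Y → Y)^[n + 1]

/-!
Fix a scale `ε` and let `h` be the entropy of the coding of `Y` by a finite cover of mesh `ε`.
About `exp (h L)` words of length `L` occur along orbits in `Y`, but there are at least
`exp (h L (n + 1))` sequences of `n + 1` consecutive words. In a graph without closed walks of at
most `n + 1` steps a walk is determined by its set of vertices, and there are too few such sets when
`n` exceeds a small exponential in `L`. So some cyclic chain of subexponentially many orbit pieces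
in `Y` closes up, in the sense that consecutive pieces stay `ε`-close along a whole word of length
`L = 2 m + 1`. By hyperbolicity the points in the middle of these words are then `O(θ ^ m)`-close,
so shadowing yields a periodic orbit of subexponential length within `O(θ ^ m)` of `Y`; taking `m` a
large multiple of `log n` gives every power of `1 / n`.
-/

open Filter Topology

section ClosedWalks

variable {V : Type*} {R : V → V → Prop} {n : ℕ}

/-- `u` is a walk in the directed graph `R` visiting `n + 1` vertices, listed in order. -/
def IsWalk (R : V → V → Prop) (u : Fin (n + 1) → V) : Prop :=
  ∀ i : Fin n, R (u i.castSucc) (u i.succ)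

/-- The directed graph `R` has a closed walk of length `c`, encoded as a `c`-periodic infinite
walk. -/
def HasClosedWalk (R : V → V → Prop) (c : ℕ) : Prop :=
  ∃ a : ℕ → V, (∀ i, R (a i) (a (i + 1))) ∧ Function.Periodic a c

theorem IsWalk.hasClosedWalk_of_rel {u : Fin (n + 1) → V} (hu : IsWalk R u) {i j : Fin (n + 1)}
    (hij : i ≤ j) (hback : R (u j) (u i)) : HasClosedWalk R (j - i + 1) := by
  have : (i : ℕ) ≤ j := hij
  have hlt : ∀ t, t % (j - i + 1) < (j - i + 1 : ℕ) := fun t ↦ Nat.mod_lt t (Nat.succ_pos _)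
  refine ⟨fun t ↦ u ⟨i + t % (j - i + 1), by have := hlt t; omega⟩, fun t ↦ ?_, fun t ↦ ?_⟩
  · rcases (Nat.succ_le_of_lt (hlt t)).lt_or_eq with hinside | hend
    · have hsucc : (t + 1) % (j - i + 1) = t % (j - i + 1) + 1 := by
        rw [← Nat.mod_add_mod, Nat.mod_eq_of_lt hinside]
      simp only [hsucc]
      exact hu ⟨i + t % (j - i + 1), by omega⟩
    · have hsucc : (t + 1) % (j - i + 1) = 0 := by
        rw [← Nat.mod_add_mod, ← Nat.succ_eq_add_one, hend, Nat.mod_self]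
      have hlast : i + t % (j - i + 1) = j := by omega
      simpa only [hsucc, hlast, Nat.add_zero] using hback
  · simp only [Nat.add_mod_right]

theorem IsWalk.injective_of_forall_rel_lt {u : Fin (n + 1) → V} (hu : IsWalk R u)
    (hlt : ∀ i j, R (u i) (u j) → i < j) : Function.Injective u := by
  refine .of_lt_imp_ne fun i j hij heq ↦ ?_
  obtain ⟨j, rfl⟩ := Fin.exists_succ_eq_of_ne_zero (Fin.ne_zero_of_lt hij)
  have hji : j.castSucc < i := hlt _ _ (heq ▸ hu j)
  exact hij.not_ge (Fin.castSucc_lt_iff_succ_le.1 hji)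

theorem IsWalk.eq_of_range_subset {u v : Fin (n + 1) → V} (hv : IsWalk R v)
    (hlt : ∀ i j, R (u i) (u j) → i < j) (hrange : Set.range v ⊆ Set.range u) : u = v := by
  choose position hposition using fun i ↦ hrange (Set.mem_range_self i)
  have hmono : StrictMono position := Fin.strictMono_iff_lt_succ.2 fun i ↦
    hlt _ _ (by simpa only [hposition] using hv i)
  have hid : position = id := (hmono.range_inj strictMono_id).1 <| by
    rw [(Finite.surjective_of_injective hmono.injective).range_eq, Set.range_id]
  exact funext fun i ↦ by simpa only [hid, id_eq] using hposition i

-- Without short closed walks a walk only moves forward, so it is determined by its set of vertices.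
theorem exists_hasClosedWalk_of_choose_lt_ncard {S : Set V} (hS : S.Finite)
    {P : Set (Fin (n + 1) → V)} (hPS : ∀ u ∈ P, ∀ i, u i ∈ S) (hP : ∀ u ∈ P, IsWalk R u)
    (hcard : S.ncard.choose (n + 1) < P.ncard) : ∃ c, 1 ≤ c ∧ c ≤ n + 1 ∧ HasClosedWalk R c := by
  classical
  by_contra! hno
  have hlt : ∀ u ∈ P, ∀ i j, R (u i) (u j) → i < j := fun u hu i j hR ↦ by
    by_contra! hji
    exact hno _ (Nat.le_add_left _ _) (by omega) ((hP u hu).hasClosedWalk_of_rel hji hR)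
  refine hcard.not_ge ?_
  rw [Set.ncard_eq_toFinset_card S hS, ← Finset.card_powersetCard, ← Set.ncard_coe_finset]
  refine Set.ncard_le_ncard_of_injOn (fun u ↦ Finset.univ.image u) (fun u hu ↦ ?_)
    (fun u hu v hv heq ↦ ?_) (Finset.finite_toSet _)
  · simp only [Finset.mem_coe, Finset.mem_powersetCard, Finset.image_subset_iff,
      Set.Finite.mem_toFinset, Finset.mem_univ, forall_const]
    refine ⟨hPS u hu, ?_⟩
    rw [Finset.card_image_of_injective _ ((hP u hu).injective_of_forall_rel_lt (hlt u hu)),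
      Finset.card_univ, Fintype.card_fin]
  · refine (hP v hv).eq_of_range_subset (hlt u hu) ?_
    simpa using (congrArg (fun s : Finset V ↦ (s : Set V)) heq).ge

end ClosedWalks

section Growth

open Real

theorem exists_exp_growthRate {p : ℕ → ℝ} (hone : ∀ N, 1 ≤ p N)
    (hmul : ∀ m n, p (m + n) ≤ p m * p n) :
    ∃ h : ℝ, (∀ N : ℕ, exp (h * N) ≤ p N) ∧
      ∀ η > 0, ∀ᶠ N : ℕ in atTop, p N ≤ exp ((h + η) * N) := by
  have hpos : ∀ N, 0 < p N := fun N ↦ one_pos.trans_le (hone N)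
  have hsub : Subadditive fun N ↦ log (p N) := fun m n ↦ by
    simpa only [log_mul (hpos m).ne' (hpos n).ne'] using log_le_log (hpos _) (hmul m n)
  have hbdd : BddBelow (Set.range fun N : ℕ ↦ log (p N) / N) :=
    ⟨0, by rintro _ ⟨N, rfl⟩; exact div_nonneg (log_nonneg (hone N)) N.cast_nonneg⟩
  refine ⟨hsub.lim, fun N ↦ ?_, fun η hη ↦ ?_⟩
  · rcases Nat.eq_zero_or_pos N with rfl | hN
    · simpa using hone 0
    · have hlim := hsub.lim_le_div hbdd hN.ne'
      rwa [le_div_iff₀ (Nat.cast_pos.2 hN), le_log_iff_exp_le (hpos N)] at hlim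
  · filter_upwards [(hsub.tendsto_lim hbdd).eventually_le_const (lt_add_of_pos_right _ hη),
      eventually_gt_atTop 0] with N hlim hN
    rwa [div_le_iff₀ (Nat.cast_pos.2 hN), log_le_iff_le_exp (hpos N)] at hlim

theorem choose_lt_pow_of_exp_one_mul_lt {M k : ℕ} {b : ℝ} (hk : k ≠ 0)
    (h : exp 1 * M < k * b) : (M.choose k : ℝ) < b ^ k := by
  have hfac : (k : ℝ) ^ k ≤ exp 1 ^ k * k.factorial := by
    rw [← div_le_iff₀ (by positivity), ← exp_nat_mul, mul_one]
    exact pow_div_factorial_le_exp (k : ℝ) k.cast_nonneg k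
  have hb : 0 ≤ b := by
    by_contra! hb
    have : k * b ≤ 0 := mul_nonpos_of_nonneg_of_nonpos k.cast_nonneg hb.le
    exact absurd (h.trans_le this) (not_lt.2 (by positivity))
  have hpow : exp 1 ^ k * (M : ℝ) ^ k < exp 1 ^ k * (b ^ k * k.factorial) :=
    calc exp 1 ^ k * (M : ℝ) ^ k = (exp 1 * M) ^ k := (mul_pow ..).symm
      _ < (k * b) ^ k := pow_lt_pow_left₀ h (by positivity) hk
      _ = k ^ k * b ^ k := mul_pow ..
      _ ≤ exp 1 ^ k * k.factorial * b ^ k := by gcongr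
      _ = exp 1 ^ k * (b ^ k * k.factorial) := by ring
  refine (Nat.choose_le_pow_div k M).trans_lt ?_
  rw [div_lt_iff₀ (by positivity)]
  exact lt_of_mul_lt_mul_left hpow (by positivity)

theorem exists_choose_lt_pow {M : ℕ} {b q : ℝ} (hb : 0 < b) (hq : 1 ≤ q) (hM : M ≤ b * q) :
    ∃ n : ℕ, ((n + 1 : ℕ) : ℝ) ≤ 4 * q ∧ (M.choose (n + 1) : ℝ) < b ^ (n + 1) := by
  refine ⟨⌊3 * q⌋₊, ?_, choose_lt_pow_of_exp_one_mul_lt (Nat.succ_ne_zero _) ?_⟩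
  · have := Nat.floor_le (a := 3 * q) (by positivity)
    push_cast
    linarith
  · calc exp 1 * M ≤ 3 * (b * q) := by gcongr; exact exp_one_lt_three.le
      _ = 3 * q * b := by ring
      _ < (⌊3 * q⌋₊ + 1 : ℕ) * b := by
        gcongr
        exact_mod_cast Nat.lt_floor_add_one (3 * q)

end Growth

section Itineraries

variable {α ι : Type*} {f : α → α} {code : α → ι}

/-- The word of length `N` that records the `code` of the first `N` points of the `f`-orbit
of `x`. -/
def itinerary (f : α → α) (code : α → ι) (N : ℕ) (x : α) : Fin N → ι :=
  fun i ↦ code (f^[i] x)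

/-- The directed graph on words of length `L` with an edge from `v` to `w` when some orbit has
the word `v` followed by the word `w` in its itinerary. -/
def blockGraph (f : α → α) (code : α → ι) (L : ℕ) (v w : Fin L → ι) : Prop :=
  ∃ x, itinerary f code L x = v ∧ itinerary f code L (f^[L] x) = w

theorem itinerary_add (m n : ℕ) (x : α) :
    itinerary f code (m + n) x =
      Fin.append (itinerary f code m x) (itinerary f code n (f^[m] x)) := by
  funext i
  refine Fin.addCases (fun i ↦ ?_) (fun i ↦ ?_) i
  · simp [itinerary]
  · simp [itinerary, ← Function.iterate_add_apply, Nat.add_comm]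

theorem itinerary_mul_apply (k L : ℕ) (x : α) (i : Fin k) (j : Fin L) :
    itinerary f code (k * L) x (finProdFinEquiv (i, j)) =
      itinerary f code L (f^[L * i] x) j :=
  congrArg code (Function.iterate_add_apply f j (L * i) x)

theorem isWalk_blockGraph (n L : ℕ) (x : α) :
    IsWalk (blockGraph f code L) fun i : Fin (n + 1) ↦ itinerary f code L (f^[L * i] x) :=
  fun i ↦ ⟨f^[L * i] x, rfl, by
    simp only [← Function.iterate_add_apply, Fin.val_succ, Nat.mul_succ, Nat.add_comm]⟩

theorem ncard_range_itinerary_add_le [Finite ι] (m n : ℕ) :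
    (Set.range (itinerary f code (m + n))).ncard ≤
      (Set.range (itinerary f code m)).ncard * (Set.range (itinerary f code n)).ncard := by
  rw [← Set.ncard_prod]
  refine le_trans (Set.ncard_le_ncard ?_) (Set.ncard_image_le (f := Fin.append.uncurry))
  rintro _ ⟨x, rfl⟩
  exact ⟨(itinerary f code m x, itinerary f code n (f^[m] x)), ⟨⟨x, rfl⟩, ⟨f^[m] x, rfl⟩⟩,
    (itinerary_add m n x).symm⟩

theorem ncard_range_blocks (f : α → α) (code : α → ι) (k L : ℕ) :
    (Set.range fun x (i : Fin k) ↦ itinerary f code L (f^[L * i] x)).ncard =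
      (Set.range (itinerary f code (k * L))).ncard := by
  let toBlocks : (Fin (k * L) → ι) → Fin k → Fin L → ι := fun w i j ↦ w (finProdFinEquiv (i, j))
  have hinj : Function.Injective toBlocks := fun v w h ↦ funext fun t ↦ by
    simpa only [toBlocks, Prod.mk.eta, Equiv.apply_symm_apply] using
      congrFun (congrFun h (finProdFinEquiv.symm t).1) (finProdFinEquiv.symm t).2
  rw [← Set.ncard_image_of_injective _ hinj, ← Set.range_comp]
  exact congrArg (fun g ↦ (Set.range g).ncard) <| funext fun x ↦ funext fun i ↦ funext fun j ↦
    (itinerary_mul_apply k L x i j).symm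

theorem eventually_exists_hasClosedWalk_blockGraph [Nonempty α] [Finite ι] (f : α → α)
    (code : α → ι) {η : ℝ} (hη : 0 < η) :
    ∀ᶠ L : ℕ in atTop, ∃ c : ℕ, 1 ≤ c ∧ c ≤ 4 * Real.exp (η * L) ∧
      HasClosedWalk (blockGraph f code L) c := by
  obtain ⟨h, hlower, hupper⟩ := exists_exp_growthRate
    (p := fun N ↦ ((Set.range (itinerary f code N)).ncard : ℝ))
    (fun N ↦ by exact_mod_cast (Set.ncard_pos (Set.toFinite _)).2 (Set.range_nonempty _))
    (fun m n ↦ by exact_mod_cast ncard_range_itinerary_add_le m n)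
  filter_upwards [hupper η hη] with L hL
  rw [add_mul, Real.exp_add] at hL
  obtain ⟨n, hn, hchoose⟩ := exists_choose_lt_pow (Real.exp_pos _)
    (Real.one_le_exp (by positivity)) hL
  have hcard : (Set.range (itinerary f code L)).ncard.choose (n + 1) <
      (Set.range fun x (i : Fin (n + 1)) ↦ itinerary f code L (f^[L * i] x)).ncard := by
    rw [ncard_range_blocks, ← Nat.cast_lt (α := ℝ)]
    calc _ < Real.exp (h * L) ^ (n + 1) := hchoose
      _ = Real.exp (h * ((n + 1) * L : ℕ)) := by
        rw [← Real.exp_nat_mul]; congr 1; push_cast; ring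
      _ ≤ _ := hlower _
  obtain ⟨c, hc, hcn, hwalk⟩ := exists_hasClosedWalk_of_choose_lt_ncard (Set.toFinite _)
    (Set.forall_mem_range.2 fun x i ↦ Set.mem_range_self _)
    (Set.forall_mem_range.2 fun x ↦ isWalk_blockGraph n L x) hcard
  exact ⟨c, hc, (Nat.cast_le.2 hcn).trans hn, hwalk⟩

theorem HasClosedWalk.exists_periodic_itinerary_eq {L c : ℕ}
    (hwalk : HasClosedWalk (blockGraph f code L) c) :
    ∃ y : ℕ → α, Function.Periodic y c ∧
      ∀ i, itinerary f code L (f^[L] (y i)) = itinerary f code L (y (i + 1)) := by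
  obtain ⟨a, hedge, hper⟩ := hwalk
  choose realize hfst hsnd using
    fun e : {e : (Fin L → ι) × (Fin L → ι) // blockGraph f code L e.1 e.2} ↦ e.2
  refine ⟨fun i ↦ realize ⟨(a i, a (i + 1)), hedge i⟩, fun i ↦ ?_, fun i ↦ ?_⟩
  · simp only [hper i, Nat.add_right_comm i c 1, hper (i + 1)]
  · exact (hsnd ⟨(a i, a (i + 1)), hedge i⟩).trans (hfst ⟨(a (i + 1), _), hedge (i + 1)⟩).symm

end Itineraries

theorem exists_finite_code {X : Type*} [PseudoMetricSpace X] {Y : Set X}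
    (hY : TotallyBounded Y) {ε : ℝ} (hε : 0 < ε) :
    ∃ (t : Set X) (code : Y → t), t.Finite ∧ ∀ x y, code x = code y → dist x y ≤ ε := by
  obtain ⟨t, ht, hcover⟩ := Metric.totallyBounded_iff.1 hY (ε / 2) (half_pos hε)
  have hnear : ∀ x : Y, ∃ s : t, dist (x : X) s < ε / 2 := fun x ↦ by
    simpa using hcover x.2
  choose code hcode using hnear
  refine ⟨t, code, ht, fun x y hxy ↦ ?_⟩
  calc dist (x : X) y ≤ dist (x : X) (code x) + dist (y : X) (code x) := dist_triangle_right ..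
    _ ≤ ε / 2 + ε / 2 := add_le_add (hcode x).le (hxy ▸ hcode y).le
    _ = ε := add_halves ε

theorem eventually_exists_periodic_blocks {X : Type*} [PseudoMetricSpace X] {f : X → X}
    {Y : Set X} (hne : Y.Nonempty) (hbdd : TotallyBounded Y) (hf : Set.MapsTo f Y Y)
    {ε η : ℝ} (hε : 0 < ε) (hη : 0 < η) :
    ∀ᶠ L : ℕ in atTop, ∃ c : ℕ, 1 ≤ c ∧ c ≤ 4 * Real.exp (η * L) ∧
      ∃ y : ℕ → X, (∀ i, y i ∈ Y) ∧ Function.Periodic y c ∧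
        ∀ i, ∀ j < L, dist (f^[j] (f^[L] (y i))) (f^[j] (y (i + 1))) ≤ ε := by
  obtain ⟨t, code, ht, hcode⟩ := exists_finite_code hbdd hε
  have := hne.to_subtype
  have := ht.to_subtype
  filter_upwards [eventually_exists_hasClosedWalk_blockGraph (hf.restrict f Y Y) code hη]
    with L ⟨c, hc, hcL, hwalk⟩
  obtain ⟨y, hper, hy⟩ := hwalk.exists_periodic_itinerary_eq
  refine ⟨c, hc, hcL, fun i ↦ y i, fun i ↦ (y i).2, fun i ↦ congrArg _ (hper i), fun i j hj ↦ ?_⟩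
  simpa only [hf.iterate_restrict, Subtype.dist_eq, Set.MapsTo.val_restrict_apply] using
    hcode _ _ (congrFun (hy i) ⟨j, hj⟩)

theorem iterate_apply_iterate_of_leftInverse {α : Type*} {f g : α → α}
    (h : Function.LeftInverse g f) {j n : ℕ} (hjn : j ≤ n) (x : α) :
    g^[j] (f^[n] x) = f^[n - j] x := by
  obtain ⟨i, rfl⟩ := Nat.exists_eq_add_of_le hjn
  rw [Function.iterate_add_apply, h.iterate j, Nat.add_sub_cancel_left]

section LocalSets

variable {X : Type*} [MetricSpace X] {T : X ≃ₜ X} {ε : ℝ} {x y : X}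

theorem self_mem_locStable (hε : 0 ≤ ε) (x : X) : x ∈ locStable T ε x :=
  fun n ↦ (dist_self (T^[n] x)).trans_le hε

theorem iterate_mem_locStable (hy : y ∈ locStable T ε x) (m : ℕ) :
    T^[m] y ∈ locStable T ε (T^[m] x) := fun n ↦ by
  simpa only [← Function.iterate_add_apply] using hy (n + m)

theorem iterate_mem_locUnstable {m : ℕ} (hy : y ∈ locUnstable T ε x)
    (hclose : ∀ j ≤ m, dist (T^[j] y) (T^[j] x) ≤ ε) :
    T^[m] y ∈ locUnstable T ε (T^[m] x) := fun n ↦ by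
  rcases le_total n m with hnm | hmn
  · simpa only [iterate_apply_iterate_of_leftInverse T.symm_apply_apply hnm] using
      hclose (m - n) (Nat.sub_le m n)
  · obtain ⟨i, rfl⟩ := Nat.exists_eq_add_of_le' hmn
    simpa only [Function.iterate_add_apply, Function.LeftInverse.iterate T.symm_apply_apply m _]
      using hy i

end LocalSets

/-- Hyperbolicity of a homeomorphism with constants: on local stable and unstable sets of size
`ε₀` the map and its inverse contract by the factor `θ`, and points at distance at most `r` have a
local product point, whose distance to them is at most `C` times their distance. -/
structure UniformlyHyperbolic {X : Type*} [MetricSpace X] (T : X ≃ₜ X) (ε₀ r C θ : ℝ) :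
    Prop where
  ε₀_pos : 0 < ε₀
  r_pos : 0 < r
  one_le_C : 1 ≤ C
  θ_pos : 0 < θ
  θ_lt_one : θ < 1
  contract_stable : ∀ x, ∀ y ∈ locStable T ε₀ x, dist (T y) (T x) ≤ θ * dist y x
  contract_unstable : ∀ x, ∀ y ∈ locUnstable T ε₀ x,
    dist (T.symm y) (T.symm x) ≤ θ * dist y x
  exists_product : ∀ x y, dist x y ≤ r → ∃ w ∈ locUnstable T ε₀ x ∩ locStable T ε₀ y,
    dist w x ≤ C * dist x y ∧ dist w y ≤ C * dist x y

theorem HypHomeo.exists_uniformlyHyperbolic {X : Type*} [MetricSpace X] [CompactSpace X]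
    {T : X ≃ₜ X} {ε₀ ε₁ C₀ : ℝ} {lu ls : X → ℝ} {br : X → X → X}
    (hT : HypHomeo T ε₀ ε₁ lu ls br C₀) :
    ∃ θ, UniformlyHyperbolic T ε₀ (2 * ε₁) (max 1 C₀) θ := by
  have hlower : ∀ l : X → ℝ, Continuous l → (∀ x, 0 < l x) → ∃ c > 0, ∀ x, c ≤ l x :=
    fun l hl hpos ↦ by
      simpa using isCompact_univ.exists_forall_le' hl.continuousOn (fun x _ ↦ hpos x)
  obtain ⟨a, ha, hla⟩ := hlower lu hT.cont_lu hT.pos_lu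
  obtain ⟨b, hb, hlb⟩ := hlower ls hT.cont_ls hT.pos_ls
  refine ⟨Real.exp (-min a b), ?_⟩
  exact
    { ε₀_pos := hT.eps0_pos
      r_pos := mul_pos two_pos hT.eps1_pos
      one_le_C := le_max_left _ _
      θ_pos := Real.exp_pos _
      θ_lt_one := by simpa using lt_min ha hb
      contract_stable := fun x y hy ↦ by
        refine (hT.contract_s x y x hy (self_mem_locStable hT.eps0_pos.le x)).trans ?_
        gcongr
        exact (min_le_right a b).trans (hlb x)
      contract_unstable := fun x y hy ↦ by
        refine (hT.contract_u x y x hy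
          (self_mem_locStable (T := T.symm) hT.eps0_pos.le x)).trans ?_
        gcongr
        exact (min_le_left a b).trans (hla x)
      exists_product := fun x y hxy ↦ by
        have hbound : max (dist (br x y) x) (dist (br x y) y) ≤ max 1 C₀ * dist x y :=
          (hT.bracket_bound x y hxy).trans (by gcongr; exact le_max_right _ _)
        exact ⟨br x y, (hT.bracket_spec x y hxy).symm ▸ Set.mem_singleton _,
          (le_max_left _ _).trans hbound, (le_max_right _ _).trans hbound⟩ }

/-- The sequence that follows the `f`-orbits of `x 0`, `x 1`, …, each for `L` steps. -/
def concatOrbits {X : Type*} (f : X → X) (L : ℕ) (x : ℕ → X) (n : ℕ) : X :=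
  f^[n % L] (x (n / L))

theorem periodic_concatOrbits {X : Type*} {f : X → X} {L c : ℕ} {x : ℕ → X}
    (hx : Function.Periodic x c) (hL : 0 < L) :
    Function.Periodic (concatOrbits f L x) (L * c) := fun n ↦ by
  simp only [concatOrbits, Nat.add_mul_mod_self_left, Nat.add_mul_div_left _ _ hL, hx _]

theorem concatOrbits_mem {X : Type*} {f : X → X} {Y : Set X} (hf : Set.MapsTo f Y Y) {x : ℕ → X}
    (hx : ∀ k, x k ∈ Y) (L n : ℕ) : concatOrbits f L x n ∈ Y :=
  hf.iterate _ (hx _)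

namespace UniformlyHyperbolic

variable {X : Type*} [MetricSpace X] {T : X ≃ₜ X} {ε₀ r C θ : ℝ}

theorem symm (H : UniformlyHyperbolic T ε₀ r C θ) : UniformlyHyperbolic T.symm ε₀ r C θ where
  __ := H
  contract_stable := H.contract_unstable
  contract_unstable := H.contract_stable
  exists_product x y hxy := by
    obtain ⟨w, ⟨hu, hs⟩, hwy, hwx⟩ := H.exists_product y x (dist_comm x y ▸ hxy)
    exact ⟨w, ⟨hs, hu⟩, dist_comm x y ▸ hwx, dist_comm x y ▸ hwy⟩

theorem C_pos (H : UniformlyHyperbolic T ε₀ r C θ) : 0 < C :=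
  one_pos.trans_le H.one_le_C

theorem dist_iterate_le (H : UniformlyHyperbolic T ε₀ r C θ) {x y : X}
    (hy : y ∈ locStable T ε₀ x) (n : ℕ) : dist (T^[n] y) (T^[n] x) ≤ θ ^ n * dist y x := by
  induction n with
  | zero => simp
  | succ n ih =>
    simp only [Function.iterate_succ_apply']
    calc _ ≤ θ * dist (T^[n] y) (T^[n] x) := H.contract_stable _ _ (iterate_mem_locStable hy n)
      _ ≤ θ * (θ ^ n * dist y x) := mul_le_mul_of_nonneg_left ih H.θ_pos.le
      _ = θ ^ (n + 1) * dist y x := by rw [pow_succ', mul_assoc]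

theorem dist_iterate_le_dist (H : UniformlyHyperbolic T ε₀ r C θ) {x y : X}
    (hy : y ∈ locStable T ε₀ x) (n : ℕ) : dist (T^[n] y) (T^[n] x) ≤ dist y x :=
  (H.dist_iterate_le hy n).trans <|
    mul_le_of_le_one_left dist_nonneg (pow_le_one₀ H.θ_pos.le H.θ_lt_one.le)

-- `w` stays near the orbit of `x` because it is asymptotic to that of `y`, so `T^[m] w` is still
-- on the local unstable set of `T^[m] x`; pulling back contracts.
theorem dist_le_of_mem_locUnstable_inter_locStable (H : UniformlyHyperbolic T ε₀ r C θ)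
    {x y w : X} {ε : ℝ} {m : ℕ} (hu : w ∈ locUnstable T ε₀ x) (hs : w ∈ locStable T ε₀ y)
    (hε : dist w y + ε ≤ ε₀) (hxy : ∀ j ≤ m, dist (T^[j] x) (T^[j] y) ≤ ε) :
    dist w x ≤ θ ^ m * (dist w y + ε) := by
  have hclose : ∀ j ≤ m, dist (T^[j] w) (T^[j] x) ≤ dist w y + ε := fun j hj ↦
    (dist_triangle_right _ _ _).trans (add_le_add (H.dist_iterate_le_dist hs j) (hxy j hj))
  have hback := H.symm.dist_iterate_le
    (iterate_mem_locUnstable hu fun j hj ↦ (hclose j hj).trans hε) m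
  rw [Function.LeftInverse.iterate T.symm_apply_apply m,
    Function.LeftInverse.iterate T.symm_apply_apply m] at hback
  exact hback.trans (mul_le_mul_of_nonneg_left (hclose m le_rfl) (pow_nonneg H.θ_pos.le m))

theorem dist_le_of_forall_iterate (H : UniformlyHyperbolic T ε₀ r C θ) {x y : X} {ε : ℝ} {m : ℕ}
    (hεr : ε ≤ r) (hε₀ : (C + 1) * ε ≤ ε₀) (hfwd : ∀ j ≤ m, dist (T^[j] x) (T^[j] y) ≤ ε)
    (hbwd : ∀ j ≤ m, dist (T.symm^[j] x) (T.symm^[j] y) ≤ ε) :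
    dist x y ≤ 2 * ((C + 1) * ε) * θ ^ m := by
  have hxy : dist x y ≤ ε := hfwd 0 m.zero_le
  obtain ⟨w, ⟨hu, hs⟩, hwx, hwy⟩ := H.exists_product x y (hxy.trans hεr)
  have hscale : ∀ d ≤ C * dist x y, d + ε ≤ (C + 1) * ε := fun d hd ↦ by
    linarith [mul_le_mul_of_nonneg_left hxy H.C_pos.le]
  have hpow : 0 ≤ θ ^ m := pow_nonneg H.θ_pos.le m
  calc dist x y ≤ dist w x + dist w y := dist_triangle_left ..
    _ ≤ θ ^ m * (dist w y + ε) + θ ^ m * (dist w x + ε) := add_le_add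
        (H.dist_le_of_mem_locUnstable_inter_locStable hu hs ((hscale _ hwy).trans hε₀) hfwd)
        (H.symm.dist_le_of_mem_locUnstable_inter_locStable hs hu ((hscale _ hwx).trans hε₀)
          fun j hj ↦ (dist_comm _ _).trans_le (hbwd j hj))
    _ ≤ θ ^ m * ((C + 1) * ε) + θ ^ m * ((C + 1) * ε) := by
        gcongr
        exacts [hscale _ hwy, hscale _ hwx]
    _ = 2 * ((C + 1) * ε) * θ ^ m := by ring

theorem exists_next_shadowing_point (H : UniformlyHyperbolic T ε₀ r C θ) {L : ℕ} {δ : ℝ}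
    (hL : C * θ ^ L ≤ 1 / 2) (hδ : 2 * δ ≤ r) {x x' z : X} (hx : dist (T^[L] x) x' ≤ δ)
    (hz : z ∈ locStable T ε₀ x) (hzx : dist z x ≤ 2 * C * δ) :
    ∃ z' ∈ locUnstable T ε₀ (T^[L] z) ∩ locStable T ε₀ x',
      dist z' (T^[L] z) ≤ 2 * C * δ ∧ dist z' x' ≤ 2 * C * δ := by
  have hδ₀ : 0 ≤ δ := dist_nonneg.trans hx
  have hjump : dist (T^[L] z) x' ≤ 2 * δ :=
    calc dist (T^[L] z) x' ≤ dist (T^[L] z) (T^[L] x) + dist (T^[L] x) x' := dist_triangle ..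
      _ ≤ θ ^ L * (2 * C * δ) + δ := by
        have := H.θ_pos
        exact add_le_add ((H.dist_iterate_le hz L).trans (by gcongr)) hx
      _ = 2 * (C * θ ^ L) * δ + δ := by ring
      _ ≤ 2 * (1 / 2) * δ + δ := by gcongr
      _ = 2 * δ := by ring
  obtain ⟨z', hz', hd, hd'⟩ := H.exists_product _ _ (hjump.trans hδ)
  have hscale : C * dist (T^[L] z) x' ≤ 2 * C * δ := by
    linarith [mul_le_mul_of_nonneg_left hjump H.C_pos.le]
  exact ⟨z', hz', hd.trans hscale, hd'.trans hscale⟩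

theorem exists_unstable_chain (H : UniformlyHyperbolic T ε₀ r C θ) {L : ℕ} {δ : ℝ}
    (hL : C * θ ^ L ≤ 1 / 2) (hδ : 2 * δ ≤ r) {x : ℕ → X}
    (hx : ∀ k, dist (T^[L] (x k)) (x (k + 1)) ≤ δ) :
    ∃ z : ℕ → X, (∀ k, z k ∈ locStable T ε₀ (x k) ∧ dist (z k) (x k) ≤ 2 * C * δ) ∧
      ∀ k, z (k + 1) ∈ locUnstable T ε₀ (T^[L] (z k)) ∧
        dist (z (k + 1)) (T^[L] (z k)) ≤ 2 * C * δ := by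
  choose! next hnext hdist_unstable hdist_stable using fun k z
    (hz : z ∈ locStable T ε₀ (x k) ∧ dist z (x k) ≤ 2 * C * δ) ↦
    H.exists_next_shadowing_point hL hδ (hx k) hz.1 hz.2
  let z : ℕ → X := Nat.rec (x 0) next
  have hz : ∀ k, z k ∈ locStable T ε₀ (x k) ∧ dist (z k) (x k) ≤ 2 * C * δ := fun k ↦ by
    induction k with
    | zero =>
      have hδ₀ : 0 ≤ δ := dist_nonneg.trans (hx 0)
      have := H.C_pos
      exact ⟨self_mem_locStable H.ε₀_pos.le _, (dist_self (x 0)).trans_le (by positivity)⟩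
    | succ k ih => exact ⟨(hnext k _ ih).2, hdist_stable k _ ih⟩
  exact ⟨z, hz, fun k ↦ ⟨(hnext k _ (hz k)).1, hdist_unstable k _ (hz k)⟩⟩

theorem dist_iterate_pullback_le (H : UniformlyHyperbolic T ε₀ r C θ) {w x : X} {i N : ℕ}
    (hw : w ∈ locUnstable T ε₀ x) (hiN : i ≤ N) :
    dist (T^[i] (T.symm^[N] w)) (T^[i] (T.symm^[N] x)) ≤ θ ^ (N - i) * dist w x := by
  simpa only [iterate_apply_iterate_of_leftInverse T.apply_symm_apply hiN] using
    H.symm.dist_iterate_le hw (N - i)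

theorem exists_orbit_near_unstable_chain [CompleteSpace X] (H : UniformlyHyperbolic T ε₀ r C θ)
    {L : ℕ} {b : ℝ} (hL : θ ^ L ≤ 1 / 2) {z : ℕ → X}
    (hz : ∀ k, z (k + 1) ∈ locUnstable T ε₀ (T^[L] (z k)) ∧
      dist (z (k + 1)) (T^[L] (z k)) ≤ b) :
    ∃ q, ∀ k, ∀ i ≤ L, dist (T^[L * k + i] q) (T^[i] (z k)) ≤ 2 * b := by
  let q : ℕ → X := fun m ↦ T.symm^[L * m] (z m)
  have hq : ∀ m, q m = T.symm^[L * (m + 1)] (T^[L] (z m)) := fun m ↦ by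
    rw [Nat.mul_succ, Function.iterate_add_apply,
      Function.LeftInverse.iterate T.symm_apply_apply L]
  have hstep : ∀ k, ∀ i ≤ L, ∀ s, dist (T^[L * k + i] (q (k + s)))
      (T^[L * k + i] (q (k + s + 1))) ≤ 2 * b / 2 / 2 ^ s := fun k i hi s ↦ by
    have hlen : L * (k + s + 1) = L * s + (L - i) + (L * k + i) := by
      rw [Nat.mul_succ, Nat.mul_add]; omega
    have hθ : θ ^ (L * s + (L - i)) ≤ (1 / 2) ^ s :=
      calc θ ^ (L * s + (L - i)) ≤ θ ^ (L * s) :=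
            pow_le_pow_of_le_one H.θ_pos.le H.θ_lt_one.le (Nat.le_add_right _ _)
        _ = (θ ^ L) ^ s := pow_mul ..
        _ ≤ (1 / 2) ^ s := pow_le_pow_left₀ (pow_nonneg H.θ_pos.le L) hL s
    have hpull := H.dist_iterate_pullback_le (hz (k + s)).1 (hlen ▸ Nat.le_add_left _ _)
    rw [← hq, hlen, Nat.add_sub_cancel, ← hlen, dist_comm] at hpull
    calc _ ≤ θ ^ (L * s + (L - i)) * dist (z (k + s + 1)) (T^[L] (z (k + s))) := hpull
      _ ≤ (1 / 2) ^ s * b := mul_le_mul hθ (hz _).2 dist_nonneg (by positivity)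
      _ = 2 * b / 2 / 2 ^ s := by rw [one_div_pow]; ring
  obtain ⟨p, hp⟩ := cauchySeq_tendsto_of_complete
    (cauchySeq_of_le_geometric_two (C := 2 * b) (f := q) fun s ↦ by
      simpa only [Nat.mul_zero, Nat.add_zero, Function.iterate_zero, id_eq, Nat.zero_add] using
        hstep 0 0 L.zero_le s)
  refine ⟨p, fun k i hi ↦ ?_⟩
  have hlim : Tendsto (fun s ↦ T^[L * k + i] (q (k + s))) atTop (𝓝 (T^[L * k + i] p)) :=
    ((T.continuous.iterate _).tendsto p).comp
      (hp.comp (tendsto_atTop_mono (fun s ↦ Nat.le_add_left s k) tendsto_id))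
  have hstart : T^[L * k + i] (q k) = T^[i] (z k) := by
    rw [Nat.add_comm, Function.iterate_add_apply,
      Function.LeftInverse.iterate T.apply_symm_apply (L * k)]
  rw [← hstart, dist_comm]
  exact dist_le_of_le_geometric_two_of_tendsto₀ (hstep k i hi) hlim

theorem length_pos (H : UniformlyHyperbolic T ε₀ r C θ) {L : ℕ} (hL : C * θ ^ L ≤ 1 / 2) :
    0 < L := by
  refine Nat.pos_of_ne_zero fun h ↦ ?_
  rw [h, pow_zero, mul_one] at hL
  linarith [H.one_le_C]

theorem exists_shadowing [CompleteSpace X] (H : UniformlyHyperbolic T ε₀ r C θ) {L : ℕ} {δ : ℝ}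
    (hL : C * θ ^ L ≤ 1 / 2) (hδ : 2 * δ ≤ r) {x : ℕ → X}
    (hx : ∀ k, dist (T^[L] (x k)) (x (k + 1)) ≤ δ) :
    ∃ q, ∀ n, dist (T^[n] q) (concatOrbits T L x n) ≤ 6 * C * δ := by
  obtain ⟨z, hzx, hz⟩ := H.exists_unstable_chain hL hδ hx
  have hθL : θ ^ L ≤ 1 / 2 :=
    (le_mul_of_one_le_left (pow_nonneg H.θ_pos.le L) H.one_le_C).trans hL
  obtain ⟨q, hq⟩ := H.exists_orbit_near_unstable_chain hθL hz
  refine ⟨q, fun n ↦ ?_⟩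
  have hqz := hq (n / L) (n % L) (Nat.mod_lt n (H.length_pos hL)).le
  rw [Nat.div_add_mod] at hqz
  calc dist (T^[n] q) (concatOrbits T L x n)
      ≤ dist (T^[n] q) (T^[n % L] (z (n / L))) +
          dist (T^[n % L] (z (n / L))) (T^[n % L] (x (n / L))) := dist_triangle ..
    _ ≤ 2 * (2 * C * δ) + 2 * C * δ := add_le_add hqz
        ((H.dist_iterate_le_dist (hzx _).1 _).trans (hzx _).2)
    _ = 6 * C * δ := by ring

theorem exists_tendsto_iterate_of_mem_locStable [CompleteSpace X]
    (H : UniformlyHyperbolic T ε₀ r C θ) {N : ℕ} (hN : 0 < N) {q : X}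
    (hq : T^[N] q ∈ locStable T ε₀ q) :
    ∃ p, T^[N] p = p ∧ Tendsto (fun s ↦ T^[N * s] q) atTop (𝓝 p) := by
  have hcauchy : CauchySeq fun s ↦ T^[N * s] q :=
    cauchySeq_of_le_geometric (θ ^ N) (dist (T^[N] q) q)
      (pow_lt_one₀ H.θ_pos.le H.θ_lt_one hN.ne') fun s ↦ by
        rw [dist_comm, Nat.mul_succ, Function.iterate_add_apply, ← pow_mul, mul_comm (dist _ _)]
        exact H.dist_iterate_le hq (N * s)
  obtain ⟨p, hp⟩ := cauchySeq_tendsto_of_complete hcauchy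
  refine ⟨p, isFixedPt_of_tendsto_iterate (x := q) ?_ (T.continuous.iterate N).continuousAt, hp⟩
  simpa only [Function.iterate_mul] using hp

theorem exists_periodic_shadowing [CompleteSpace X] (H : UniformlyHyperbolic T ε₀ r C θ)
    {L c : ℕ} {δ : ℝ} (hL : C * θ ^ L ≤ 1 / 2) (hδ : 2 * δ ≤ r) (hδ₀ : 12 * C * δ ≤ ε₀)
    {x : ℕ → X} (hx : ∀ k, dist (T^[L] (x k)) (x (k + 1)) ≤ δ) (hc : 0 < c)
    (hper : Function.Periodic x c) :
    ∃ p, T^[L * c] p = p ∧ ∀ n, dist (T^[n] p) (concatOrbits T L x n) ≤ 6 * C * δ := by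
  obtain ⟨q, hq⟩ := H.exists_shadowing hL hδ hx
  have hLpos := H.length_pos hL
  have hperiodic := periodic_concatOrbits (f := T) hper hLpos
  have hreturn : T^[L * c] q ∈ locStable T ε₀ q := fun n ↦ by
    have hqn := hq (n + L * c)
    rw [hperiodic n, Function.iterate_add_apply] at hqn
    linarith [hq n, dist_triangle_right (T^[n] (T^[L * c] q)) (T^[n] q) (concatOrbits T L x n)]
  obtain ⟨p, hp, hlim⟩ := H.exists_tendsto_iterate_of_mem_locStable (Nat.mul_pos hLpos hc) hreturn
  refine ⟨p, hp, fun n ↦ le_of_tendsto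
    ((((T.continuous.iterate n).tendsto p).comp hlim).dist tendsto_const_nhds)
    (Eventually.of_forall fun s ↦ ?_)⟩
  have hqs := hq (n + s • (L * c))
  rw [hperiodic.nsmul s n, smul_eq_mul, Nat.mul_comm s, Function.iterate_add_apply] at hqs
  exact hqs

theorem exists_periodic_near_blocks [CompleteSpace X] (H : UniformlyHyperbolic T ε₀ r C θ)
    {ε : ℝ} {m c : ℕ} (hε₀ : (C + 1) * ε ≤ ε₀) (hεr : (C + 1) * ε ≤ r)
    (hm : 24 * C * θ ^ m ≤ 1) {y : ℕ → X} (hc : 0 < c) (hper : Function.Periodic y c)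
    (hy : ∀ i, ∀ j < 2 * m + 1,
      dist (T^[j] (T^[2 * m + 1] (y i))) (T^[j] (y (i + 1))) ≤ ε) :
    ∃ p, T^[(2 * m + 1) * c] p = p ∧
      ∀ n, dist (T^[n] p) (concatOrbits T (2 * m + 1) (fun i ↦ T^[m] (y i)) n) ≤
        12 * C * ((C + 1) * ε) * θ ^ m := by
  have hC := H.one_le_C
  have hθm : 0 < θ ^ m := pow_pos H.θ_pos m
  have hε : 0 ≤ ε := dist_nonneg.trans (hy 0 0 (Nat.succ_pos _))
  have hCε : 0 ≤ (C + 1) * ε := by positivity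
  have hεr' : ε ≤ r := (le_mul_of_one_le_left hε (by linarith)).trans hεr
  have hjump : ∀ i, dist (T^[2 * m + 1] (T^[m] (y i))) (T^[m] (y (i + 1))) ≤
      2 * ((C + 1) * ε) * θ ^ m := fun i ↦ by
    rw [(Function.Commute.iterate_iterate_self T (2 * m + 1) m).eq]
    refine H.dist_le_of_forall_iterate hεr' hε₀ (fun j hj ↦ ?_) fun j hj ↦ ?_
    · simpa only [Function.iterate_add_apply T j m] using hy i (j + m) (by omega)
    · simpa only [iterate_apply_iterate_of_leftInverse T.symm_apply_apply hj] using
        hy i (m - j) (by omega)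
  have hL : C * θ ^ (2 * m + 1) ≤ 1 / 2 := by
    have hpow : θ ^ (2 * m + 1) ≤ θ ^ m :=
      pow_le_pow_of_le_one H.θ_pos.le H.θ_lt_one.le (by omega)
    linarith [mul_le_mul_of_nonneg_left hpow H.C_pos.le]
  have hδ : 4 * θ ^ m ≤ 1 := by linarith [le_mul_of_one_le_left hθm.le hC]
  obtain ⟨p, hp, hnear⟩ := H.exists_periodic_shadowing hL
    (by linarith [mul_le_of_le_one_left hCε hδ]) (by linarith [mul_le_of_le_one_left hCε hm])
    hjump hc fun i ↦ congrArg _ (hper i)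
  exact ⟨p, hp, fun n ↦ (hnear n).trans_eq (by ring)⟩

end UniformlyHyperbolic

section Rates

theorem eventually_mul_exp_le_exp {a b : ℝ} (hab : a < b) (K : ℝ) :
    ∀ᶠ x : ℝ in atTop, x * (K * Real.exp (a * x)) ≤ Real.exp (b * x) := by
  have hlin : (fun x : ℝ ↦ K * x) =o[atTop] fun x ↦ Real.exp ((b - a) * x) := by
    simpa only [pow_one] using
      (isLittleO_pow_exp_pos_mul_atTop 1 (sub_pos.2 hab)).const_mul_left K
  filter_upwards [hlin.bound one_pos] with x hx
  rw [one_mul, Real.norm_eq_abs, Real.norm_eq_abs, Real.abs_exp] at hx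
  calc x * (K * Real.exp (a * x)) = K * x * Real.exp (a * x) := by ring
    _ ≤ Real.exp ((b - a) * x) * Real.exp (a * x) := by
        gcongr
        exact (le_abs_self _).trans hx
    _ = Real.exp (b * x) := by rw [← Real.exp_add]; congr 1; ring

theorem exists_rate_of_exp_le {θ τ : ℝ} (hθ : 0 < θ) (hθ' : θ < 1) (hτ : 0 < τ) (D : ℝ) :
    ∃ η > 0, ∃ m : ℕ → ℕ, Tendsto m atTop atTop ∧
      ∀ᶠ n : ℕ in atTop, Real.exp (η * m n) ≤ n ∧ D * θ ^ m n ≤ (n : ℝ) ^ (-τ) := by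
  have hlog : 0 < -Real.log θ := neg_pos.2 (Real.log_neg hθ hθ')
  let A : ℝ := 2 * τ / -Real.log θ
  have hA : 0 < A := by positivity
  have hAlog : Tendsto (fun n : ℕ ↦ A * Real.log n) atTop atTop :=
    (Real.tendsto_log_atTop.comp tendsto_natCast_atTop_atTop).const_mul_atTop hA
  refine ⟨1 / (2 * A), by positivity, fun n ↦ ⌈A * Real.log n⌉₊,
    tendsto_nat_ceil_atTop.comp hAlog, ?_⟩
  filter_upwards [eventually_gt_atTop 0, hAlog.eventually_ge_atTop 1,
    ((tendsto_rpow_atTop hτ).comp tendsto_natCast_atTop_atTop).eventually_ge_atTop D]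
    with n hn hone hD
  have hn' : (0 : ℝ) < n := Nat.cast_pos.2 hn
  constructor
  · rw [← Real.le_log_iff_exp_le hn', one_div_mul_eq_div, div_le_iff₀ (by positivity)]
    linarith [Nat.ceil_lt_add_one (zero_le_one.trans hone)]
  · calc D * θ ^ ⌈A * Real.log n⌉₊ ≤ (n : ℝ) ^ τ * (n : ℝ) ^ (-(2 * τ)) := by
          refine mul_le_mul hD ?_ (by positivity) (by positivity)
          rw [← Real.rpow_natCast, Real.rpow_def_of_pos hθ, Real.rpow_def_of_pos hn',
            Real.exp_le_exp]
          calc Real.log θ * ⌈A * Real.log n⌉₊ ≤ Real.log θ * (A * Real.log n) :=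
                mul_le_mul_of_nonpos_left (Nat.le_ceil _) (neg_pos.1 hlog).le
            _ = Real.log n * -(2 * τ) := by
              have := (neg_pos.1 hlog).ne
              simp only [A]
              field_simp
      _ = (n : ℝ) ^ (-τ) := by rw [← Real.rpow_add hn']; congr 1; ring

end Rates

theorem UniformlyHyperbolic.exists_periodic_near {X : Type*} [MetricSpace X] [CompleteSpace X]
    {T : X ≃ₜ X} {ε₀ r C θ : ℝ} (H : UniformlyHyperbolic T ε₀ r C θ) {Y : Set X}
    (hYne : Y.Nonempty) (hYbdd : TotallyBounded Y) (hYinv : Set.MapsTo T Y Y) :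
    ∃ D, ∀ η > 0, ∀ᶠ m : ℕ in atTop, ∃ p, ∃ k : ℕ, 1 ≤ k ∧ k ≤ Real.exp (η * m) ∧
      T^[k] p = p ∧ ∀ j, Metric.infDist (T^[j] p) Y ≤ D * θ ^ m := by
  have hC := H.C_pos
  let ε := min ε₀ r / (C + 1)
  have hε : 0 < ε := div_pos (lt_min H.ε₀_pos H.r_pos) (by positivity)
  have hCε : (C + 1) * ε = min ε₀ r := mul_div_cancel₀ _ (by positivity)
  refine ⟨12 * C * ((C + 1) * ε), fun η hη ↦ ?_⟩
  have hlength : Tendsto (fun m : ℕ ↦ 2 * m + 1) atTop atTop :=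
    tendsto_atTop_mono (fun m ↦ (by omega : m ≤ 2 * m + 1)) tendsto_id
  have hsmall : ∀ᶠ m in atTop, 24 * C * θ ^ m ≤ 1 := by
    have := (tendsto_pow_atTop_nhds_zero_of_lt_one H.θ_pos.le H.θ_lt_one).const_mul (24 * C)
    rw [mul_zero] at this
    exact this.eventually_le_const one_pos
  filter_upwards [hsmall, eventually_ge_atTop 1,
    (tendsto_natCast_atTop_atTop.comp hlength).eventually
      (eventually_mul_exp_le_exp (by linarith : η / 4 < η / 3) 4),
    hlength.eventually
      (eventually_exists_periodic_blocks hYne hYbdd hYinv hε (by positivity : 0 < η / 4))]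
    with m hm hm_one hexp ⟨c, hc, hcm, y, hyY, hper, hy⟩
  obtain ⟨p, hp, hnear⟩ := H.exists_periodic_near_blocks (hCε.trans_le (min_le_left _ _))
    (hCε.trans_le (min_le_right _ _)) hm hc hper hy
  refine ⟨p, (2 * m + 1) * c, Nat.mul_pos (Nat.succ_pos _) hc, ?_, hp, fun j ↦ ?_⟩
  · have hm_one' : (1 : ℝ) ≤ m := Nat.one_le_cast.2 hm_one
    calc (((2 * m + 1) * c : ℕ) : ℝ) = (2 * m + 1 : ℕ) * c := Nat.cast_mul _ _
      _ ≤ (2 * m + 1 : ℕ) * (4 * Real.exp (η / 4 * (2 * m + 1 : ℕ))) := by gcongr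
      _ ≤ Real.exp (η / 3 * (2 * m + 1 : ℕ)) := hexp
      _ ≤ Real.exp (η * m) := by
        refine Real.exp_le_exp.2 ?_
        push_cast
        nlinarith
  · exact (Metric.infDist_le_dist_of_mem
      (concatOrbits_mem hYinv (fun i ↦ hYinv.iterate m (hyY i)) _ _)).trans (hnear j)

theorem exists_zIter_eq_iterate {X : Type*} [TopologicalSpace X] {T : X ≃ₜ X} {p : X} {k : ℕ}
    (hk : 1 ≤ k) (hp : T^[k] p = p) : ∀ j : ℤ, ∃ i : ℕ, zIter T j p = T^[i] p
  | Int.ofNat n => ⟨n, rfl⟩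
  | Int.negSucc n => ⟨k * (n + 1) - (n + 1), by
      have hfixed : T^[k * (n + 1)] p = p := by
        rw [Function.iterate_mul, Function.iterate_fixed hp]
      rw [← iterate_apply_iterate_of_leftInverse T.symm_apply_apply
        (Nat.le_mul_of_pos_left (n + 1) hk), hfixed]
      rfl⟩

theorem bressaud_quas_closing_lemma_general {X : Type*} [MetricSpace X] [CompleteSpace X]
    {T : X ≃ₜ X} {ε₀ r C θ : ℝ} (H : UniformlyHyperbolic T ε₀ r C θ) {Y : Set X}
    (hYne : Y.Nonempty) (hYbdd : TotallyBounded Y) (hYinv : Set.MapsTo T Y Y) {τ : ℝ}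
    (hτ : 0 < τ) :
    ∀ᶠ n : ℕ in atTop, ∃ p, ∃ k : ℕ, 1 ≤ k ∧ k ≤ n ∧ T^[k] p = p ∧
      ∀ j : ℤ, Metric.infDist (zIter T j p) Y ≤ (n : ℝ) ^ (-τ) := by
  obtain ⟨D, hD⟩ := H.exists_periodic_near hYne hYbdd hYinv
  obtain ⟨η, hη, m, hm, hrate⟩ := exists_rate_of_exp_le H.θ_pos H.θ_lt_one hτ D
  filter_upwards [hm.eventually (hD η hη), hrate]
    with n ⟨p, k, hk, hkm, hp, hnear⟩ ⟨hmn, hDn⟩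
  refine ⟨p, k, hk, Nat.cast_le.1 (hkm.trans hmn), hp, fun j ↦ ?_⟩
  obtain ⟨i, hi⟩ := exists_zIter_eq_iterate hk hp j
  exact hi ▸ (hnear i).trans hDn

/-- **Theorem 7.4** of Bochi–Garibaldi, "Extremal Norms for Fiber-Bunched Cocycles"
(Bressaud–Quas Closing Lemma): if `Y` is a nonempty compact invariant set of a hyperbolic
homeomorphism `T`, then for every `τ > 0` and every sufficiently large `n` there is a
periodic orbit of period at most `n` contained in the `n^{-τ}`-neighborhood of `Y`. -/
theorem bressaud_quas_closing_lemma {X : Type*} [MetricSpace X] [CompactSpace X]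
    (T : X ≃ₜ X) (ε₀ ε₁ : ℝ) (lu ls : X → ℝ) (br : X → X → X) (C₀ : ℝ)
    (hT : HypHomeo T ε₀ ε₁ lu ls br C₀)
    (Y : Set X) (hYne : Y.Nonempty) (hYcomp : IsCompact Y)
    (hYinv : (T : X → X) '' Y = Y) :
    ∀ τ : ℝ, 0 < τ → ∃ N : ℕ, ∀ n : ℕ, N ≤ n →
      ∃ (p : X) (k : ℕ), 1 ≤ k ∧ k ≤ n ∧ (T : X → X)^[k] p = p ∧
        ∀ j : ℤ, Metric.infDist (zIter T j p) Y ≤ (n : ℝ) ^ (-τ) := by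
  intro τ hτ
  obtain ⟨θ, H⟩ := hT.exists_uniformlyHyperbolic
  exact eventually_atTop.1 (bressaud_quas_closing_lemma_general H hYne hYcomp.totallyBounded
    (Set.mapsTo_iff_image_subset.2 hYinv.subset) hτ)
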